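/- Let d, N be positive integers, let G₀,…,G_{N−1} be symmetric positive-definite real d×d matrices, let ν₁,…,ν_{N−1} ∈ ℝ^d, and let a, b ∈ ℝ^d. Define μ_{N−1} := ( Σ_{i=0}^{N−1} G_i^{−1} )^{−1} ( 2(a − b) − Σ_{i=0}^{N−1} G_i^{−1} Σ_{j=i+1}^{N−1} ν_j ), and for each i = 0,…,N−1 set u_i := −(1/2) G_i^{−1} ( μ_{N−1} + Σ_{j=i+1}^{N−1} ν_j ) and μ_i := μ_{N−1} + Σ_{j=i+1}^{N−1} ν_j. Then (u₀,…,u_{N−1}, μ₀,…,μ_{N−1}) satisfies the linear system: 2 G_i u_i + μ_i = 0 for i = 0,…,N−1; ν_i + μ_i = μ_{i−1} for i = 1,…,N−1; and Σ_{i=0}^{N−1} u_i = b − a. -/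

import Mathlib

open Matrix Finset

/-- The ProbGEORCE update scheme: the explicitly defined multipliers and controls
satisfy the fixed-coefficient optimality system
`2 Gᵢ uᵢ + μᵢ = 0`, `νᵢ + μᵢ = μ_{i-1}`, `Σᵢ uᵢ = b - a`. -/
theorem stmt2 (d N : ℕ) (hd : 0 < d) (hN : 0 < N)
    (G : Fin N → Matrix (Fin d) (Fin d) ℝ)
    (hG : ∀ i, (G i).PosDef) (hGsym : ∀ i, (G i).IsSymm)
    (ν : Fin N → Fin d → ℝ) (a b : Fin d → ℝ)
    (μlast : Fin d → ℝ)
    (hμlast : μlast = (∑ i, (G i)⁻¹)⁻¹.mulVec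
      ((2 : ℝ) • (a - b) - ∑ i, (G i)⁻¹.mulVec (∑ j ∈ Finset.Ioi i, ν j)))
    (u μ : Fin N → Fin d → ℝ)
    (hu : ∀ i, u i = -((1 / 2 : ℝ) • (G i)⁻¹.mulVec (μlast + ∑ j ∈ Finset.Ioi i, ν j)))
    (hμ : ∀ i, μ i = μlast + ∑ j ∈ Finset.Ioi i, ν j) :
    (∀ i, (2 : ℝ) • (G i).mulVec (u i) + μ i = 0) ∧
    (∀ i j : Fin N, (j : ℕ) + 1 = (i : ℕ) → ν i + μ i = μ j) ∧
    (∑ i, u i = b - a) := by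
  have hdet : ∀ i, IsUnit (G i).det := fun i => (hG i).det_pos.ne'.isUnit
  have hS : (∑ i, (G i)⁻¹).PosDef := by
    haveI : Nonempty (Fin N) := ⟨⟨0, hN⟩⟩
    exact Matrix.posDef_sum Finset.univ_nonempty (fun i _ => (hG i).inv)
  have hSdet : IsUnit (∑ i, (G i)⁻¹).det := hS.det_pos.ne'.isUnit
  refine ⟨fun i => ?_, fun i j hij => ?_, ?_⟩
  · rw [hu, hμ, Matrix.mulVec_neg, Matrix.mulVec_smul, Matrix.mulVec_mulVec,
      Matrix.mul_nonsing_inv _ (hdet i), Matrix.one_mulVec, smul_neg, smul_smul]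
    norm_num
  · have h : Finset.Ioi j = insert i (Finset.Ioi i) := by
      ext k
      simp only [Finset.mem_Ioi, Finset.mem_insert, Fin.lt_def, Fin.ext_iff]
      omega
    rw [hμ, hμ, h, Finset.sum_insert (by simp)]
    abel
  · have h1 : (∑ i, (G i)⁻¹).mulVec μlast =
        (2 : ℝ) • (a - b) - ∑ i, (G i)⁻¹.mulVec (∑ j ∈ Finset.Ioi i, ν j) := by
      rw [hμlast, Matrix.mulVec_mulVec, Matrix.mul_nonsing_inv _ hSdet, Matrix.one_mulVec]
    rw [Matrix.sum_mulVec] at h1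
    simp only [hu, Finset.sum_neg_distrib, ← Finset.smul_sum, Matrix.mulVec_add,
      Finset.sum_add_distrib]
    rw [h1, sub_add_cancel, smul_smul]
    norm_num
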